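/- arXiv:2309.17412 — 2 statements merged into one kernel-verified Lean document; each statement's English description precedes it below -/
import Mathlib

section
/- Let A be a C*-algebra and I an essential closed two-sided ideal of A. If I admits a faithful positive bounded trace, then so does A. (Consequently, I admits a faithful bounded trace if and only if its multiplier algebra M(I) does.) -/
open scoped ComplexOrder

open Filter Topology

section Trace

variable {J : Type*} [NonUnitalCStarAlgebra J] (φ : J →L[ℂ] ℂ)

/-- Polarization: the trace identity on `star x * x` gives it on all products. -/
theorem trace_mul_comm (htr : ∀ x : J, φ (star x * x) = φ (x * star x)) (x y : J) :
    φ (x * y) = φ (y * x) := by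
  have h₁ := htr (star x + y)
  have h₂ := htr (star x + Complex.I • y)
  simp only [star_add, star_smul, star_star, add_mul, mul_add, map_add, smul_mul_assoc,
    mul_smul_comm, map_smul, smul_eq_mul, Complex.star_def, Complex.conj_I] at h₁ h₂
  have h₃ := htr (star x)
  have h₄ := htr y
  simp only [star_star] at h₃
  linear_combination (h₁ - Complex.I * h₂ + (Complex.I - 1) * h₃ +
    (-1 - Complex.I * Complex.I * Complex.I) * h₄ +
    (φ (x * y) - φ (y * x) - φ (star y * star x) + φ (star x * star y)) * Complex.I_sq) / 2

/-- A positive functional is monotone under `c * u * star c ≤ ‖u‖ • (c * star c)`. -/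
theorem positive_conjugate_le [PartialOrder J] [StarOrderedRing J]
    (hpos : ∀ x : J, 0 ≤ φ (star x * x)) (c : J) {u : J} (hu : 0 ≤ u) :
    φ (c * u * star c) ≤ ‖u‖ * φ (c * star c) := by
  have h := CStarAlgebra.star_right_conjugate_le_norm_smul (a := c) (b := u)
    (IsSelfAdjoint.of_nonneg hu)
  obtain ⟨s, hs⟩ := CStarAlgebra.nonneg_iff_eq_star_mul_self.mp (sub_nonneg.mpr h)
  have := hpos s
  rw [← hs, map_sub, sub_nonneg, ← Complex.coe_smul, map_smul, smul_eq_mul] at this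
  exact this

end Trace

/-- Proposition 6.6 (iii), first part.  `J` is a C*-algebra isometrically embedded via `ι` as
an *essential* closed two-sided ideal of the C*-algebra `A`.  If `J` admits a faithful
positive bounded trace, then so does `A`. -/
theorem faithful_trace_of_essential_ideal {A J : Type*}
    [NonUnitalCStarAlgebra A] [NonUnitalCStarAlgebra J]
    (ι : J →⋆ₙₐ[ℂ] A) (hiso : Isometry ι)
    (hideal : ∀ (a : A) (x : J), (∃ y : J, ι y = a * ι x) ∧ (∃ y : J, ι y = ι x * a))
    (hess : ∀ a : A, (∀ x : J, a * ι x = 0) → a = 0)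
    (φ : J →L[ℂ] ℂ)
    (hpos : ∀ x : J, 0 ≤ φ (star x * x))
    (htr : ∀ x : J, φ (star x * x) = φ (x * star x))
    (hfaith : ∀ x : J, φ (star x * x) = 0 → x = 0) :
    ∃ ψ : A →L[ℂ] ℂ, (∀ a : A, 0 ≤ ψ (star a * a)) ∧
      (∀ a : A, ψ (star a * a) = ψ (a * star a)) ∧
      ∀ a : A, ψ (star a * a) = 0 → a = 0 := by
  let _ : PartialOrder J := CStarAlgebra.spectralOrder J
  have : StarOrderedRing J := CStarAlgebra.spectralOrderedRing J
  have hcomm := trace_mul_comm φ htr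
  have hinj := hiso.injective
  have hnorm (x : J) : ‖ι x‖ = ‖x‖ := hiso.norm_map_of_map_zero (map_zero ι) x
  choose l hl using fun a x => (hideal a x).1
  choose r hr using fun a x => (hideal a x).2
  -- The limit of `φ (a u)` along an ultrafilter refining the approximate unit of `J`.
  let U : Ultrafilter J := Ultrafilter.of (CStarAlgebra.approximateUnit J)
  have hU : (U : Filter J) ≤ CStarAlgebra.approximateUnit J := Ultrafilter.of_le _
  have hinc := CStarAlgebra.increasingApproximateUnit J
  have hU_nonneg : ∀ᶠ u in (U : Filter J), 0 ≤ u := hU hinc.eventually_nonneg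
  have hU_norm : ∀ᶠ u in (U : Filter J), ‖u‖ ≤ 1 := hU hinc.eventually_norm
  have hU_mul (x : J) : Tendsto (fun u => φ (x * u)) U (𝓝 (φ x)) :=
    (φ.continuous.tendsto x).comp ((hinc.tendsto_mul_left x).mono_left hU)
  have hbound (a : A) : ∀ᶠ u in (U : Filter J), ‖φ (l a u)‖ ≤ ‖φ‖ * ‖a‖ := by
    filter_upwards [hU_norm] with u hu
    calc ‖φ (l a u)‖ ≤ ‖φ‖ * ‖l a u‖ := φ.le_opNorm _
      _ ≤ ‖φ‖ * (‖a‖ * 1) := by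
        gcongr
        rw [← hnorm, hl]
        exact (norm_mul_le _ _).trans (by rw [hnorm]; gcongr)
      _ = ‖φ‖ * ‖a‖ := by rw [mul_one]
  have hlim (a : A) : ∃ z : ℂ, Tendsto (fun u => φ (l a u)) U (𝓝 z) := by
    obtain ⟨z, -, hz⟩ := (isCompact_closedBall (0 : ℂ) (‖φ‖ * ‖a‖)).ultrafilter_le_nhds
      (U.map fun u => φ (l a u)) (by
        rw [le_principal_iff, Ultrafilter.coe_map, mem_map]
        filter_upwards [hbound a] with u hu
        simpa using hu)
    exact ⟨z, hz⟩
  choose f hf using hlim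
  let ψ : A →L[ℂ] ℂ := LinearMap.mkContinuous
    { toFun := f
      map_add' := fun a b => tendsto_nhds_unique (hf (a + b)) <|
        ((hf a).add (hf b)).congr fun u => by
          rw [← map_add]
          congr 1
          exact hinj (by simp [hl, add_mul])
      map_smul' := fun c a => tendsto_nhds_unique (hf (c • a)) <|
        ((hf a).const_smul c).congr fun u => by
          rw [← map_smul]
          congr 1
          exact hinj (by simp [hl, smul_mul_assoc]) }
    ‖φ‖ fun a => le_of_tendsto (hf a).norm (hbound a)
  have hψ (a : A) : Tendsto (fun u => φ (l a u)) U (𝓝 (ψ a)) := hf a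
  have hconj (a : A) (z : J) : φ (l (a * star a) (star z * z)) = φ (r a z * star (r a z)) := by
    rw [show l (a * star a) (star z * z) = l a (star (r a z)) * z from
      hinj (by simp [hl, hr, mul_assoc, map_star]), hcomm,
      show z * l a (star (r a z)) = r a z * star (r a z) from
        hinj (by simp [hl, hr, mul_assoc, map_star])]
  have hle (a : A) {u : J} (hu : 0 ≤ u) :
      φ (l a (r (star a) u)) ≤ ‖u‖ * ψ (a * star a) := by
    refine le_of_tendsto_of_tendsto (hU_mul (l a (r (star a) u)))
      ((hψ (a * star a)).const_mul (‖u‖ : ℂ)) ?_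
    filter_upwards [hU_nonneg] with v hv
    obtain ⟨z, rfl⟩ := CStarAlgebra.nonneg_iff_eq_star_mul_self.mp hv
    rw [hconj, ← mul_assoc, hcomm,
      show z * (l a (r (star a) u) * star z) = r a z * u * star (r a z) from
        hinj (by simp [hl, hr, mul_assoc, map_star])]
    exact positive_conjugate_le φ hpos (r a z) hu
  have hψ_nonneg (a : A) : 0 ≤ ψ (a * star a) := by
    refine ge_of_tendsto (hψ (a * star a)) ?_
    filter_upwards [hU_nonneg] with v hv
    obtain ⟨z, rfl⟩ := CStarAlgebra.nonneg_iff_eq_star_mul_self.mp hv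
    rw [hconj, ← htr]
    exact hpos _
  have hψ_le (a : A) : ψ (star a * a) ≤ ψ (a * star a) := by
    refine le_of_tendsto (hψ (star a * a)) ?_
    filter_upwards [hU_nonneg, hU_norm] with u hu hu₁
    have hswap : φ (l (star a * a) u) = φ (l a (r (star a) u)) := by
      obtain ⟨z, rfl⟩ := CStarAlgebra.nonneg_iff_eq_star_mul_self.mp hu
      have := hconj (star a) z
      rw [star_star] at this
      rw [this, ← htr]
      congr 1
      exact hinj (by simp [hl, hr, mul_assoc, map_star])
    rw [hswap]
    refine (hle a hu).trans ?_
    exact mul_le_of_le_one_left (hψ_nonneg a) (by exact_mod_cast hu₁)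
  have hψ_tr (a : A) : ψ (star a * a) = ψ (a * star a) :=
    (hψ_le a).antisymm (by simpa using hψ_le (star a))
  refine ⟨ψ, fun a => (hψ_nonneg a).trans_eq (hψ_tr a).symm, hψ_tr, fun a ha => hess a fun x => ?_⟩
  have hx := hle a (mul_star_self_nonneg x)
  rw [← hψ_tr, ha, mul_zero,
    show l a (r (star a) (x * star x)) = l a x * star (l a x) from
      hinj (by simp [hl, hr, mul_assoc, map_star]), ← htr] at hx
  rw [← hl, hfaith _ (hx.antisymm (hpos _)), map_zero]
end

section
/- Let A be a unital C*-algebra with a closed two-sided ideal I. If I admits a faithful positive bounded trace and A/I admits a faithful tracial state, then A admits a separating family of tracial states (i.e., for every nonzero positive a ∈ A some trace on A is nonzero on a). -/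
open scoped ComplexOrder

/-- A *state* on a unital C*-algebra: a positive linear functional with `φ 1 = 1`. -/
def IsState {A : Type*} [CStarAlgebra A] (φ : A →L[ℂ] ℂ) : Prop :=
  φ 1 = 1 ∧ ∀ a : A, 0 ≤ φ (star a * a)

/-- A *tracial state*: a state `τ` with `τ(x*x) = τ(xx*)` for all `x`. -/
def IsTracialState {A : Type*} [CStarAlgebra A] (τ : A →L[ℂ] ℂ) : Prop :=
  IsState τ ∧ ∀ x : A, τ (star x * x) = τ (x * star x)

open Filter Topology

/-- A bounded functional with `φ (x⋆x) = φ (xx⋆)` satisfies the full trace identity. -/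
lemma map_mul_comm_of_map_star_mul_self {J : Type*} [NonUnitalCStarAlgebra J]
    (φ : J →L[ℂ] ℂ) (htr : ∀ x : J, φ (star x * x) = φ (x * star x)) (x y : J) :
    φ (x * y) = φ (y * x) := by
  have h₁ := htr (star x + y)
  have h₂ := htr (star x + Complex.I • y)
  simp only [star_add, star_star, star_smul, add_mul, mul_add, smul_mul_assoc, mul_smul_comm,
    map_add, map_smul, smul_eq_mul, Complex.star_def, Complex.conj_I] at h₁ h₂
  have hx := htr x
  have hy := htr y
  linear_combination (1 / 2 : ℂ) * h₁ - (Complex.I / 2) * h₂ +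
    (1 / 2 : ℂ) * (1 - Complex.I) * hx +
    (1 / 2 : ℂ) * (-1 - Complex.I * Complex.I * Complex.I) * hy +
    (1 / 2 : ℂ) * (φ (x * y) - φ (y * x) - φ (star y * star x) + φ (star x * star y)) * Complex.I_sq

/-- The action by left multiplication of `A` on a left ideal, given as an isometric embedding. -/
lemma exists_leftMul {A J : Type*} [CStarAlgebra A] [NonUnitalCStarAlgebra J]
    (ι : J →⋆ₙₐ[ℂ] A) (hiso : Isometry ι) (hideal : ∀ (a : A) (x : J), ∃ y : J, ι y = a * ι x) :
    ∃ L : A →L[ℂ] J →L[ℂ] J, ∀ a x, ι (L a x) = a * ι x := by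
  choose D hD using hideal
  have hnorm (x : J) : ‖ι x‖ = ‖x‖ := by simpa using hiso.norm_map_of_map_zero (map_zero ι) x
  refine ⟨LinearMap.mkContinuous₂ (LinearMap.mk₂ ℂ D ?_ ?_ ?_ ?_) 1 ?_, fun a x ↦ hD a x⟩
  · intro a b x
    apply hiso.injective
    simp [hD, add_mul]
  · intro c a x
    apply hiso.injective
    simp [hD]
  · intro a x y
    apply hiso.injective
    simp [hD, mul_add]
  · intro c a x
    apply hiso.injective
    simp [hD]
  · intro a x
    simp only [LinearMap.mk₂_apply]
    rw [one_mul, ← hnorm, hD, ← hnorm x]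
    exact norm_mul_le _ _

/-- A positive bounded trace on a closed ideal extends to a positive bounded trace on the
ambient algebra. -/
theorem exists_positive_trace_extension {A J : Type*} [CStarAlgebra A] [NonUnitalCStarAlgebra J]
    (ι : J →⋆ₙₐ[ℂ] A) (hiso : Isometry ι) (hideal : ∀ (a : A) (x : J), ∃ y : J, ι y = a * ι x)
    (φ : J →L[ℂ] ℂ) (hpos : ∀ x : J, 0 ≤ φ (star x * x))
    (htr : ∀ x : J, φ (star x * x) = φ (x * star x)) :
    ∃ τ : A →L[ℂ] ℂ, (∀ a : A, 0 ≤ τ (star a * a)) ∧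
      (∀ a : A, τ (star a * a) = τ (a * star a)) ∧ ∀ x : J, τ (ι x) = φ x := by
  let _ := CStarAlgebra.spectralOrder J
  have _ := CStarAlgebra.spectralOrderedRing J
  obtain ⟨L, hL⟩ := exists_leftMul ι hiso hideal
  have hcomm := map_mul_comm_of_map_star_mul_self φ htr
  have hφ_nonneg {x : J} (hx : 0 ≤ x) : 0 ≤ φ x := by
    obtain ⟨y, rfl⟩ := CStarAlgebra.nonneg_iff_eq_star_mul_self.mp hx
    exact hpos y
  have hL_mul (a b : A) (x : J) : L (a * b) x = L a (L b x) :=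
    hiso.injective (by simp [hL, mul_assoc])
  have hL_mul_right (a : A) (x y : J) : L a (x * y) = L a x * y :=
    hiso.injective (by simp [hL, mul_assoc])
  have hL_ι (x y : J) : L (ι x) y = x * y := hiso.injective (by simp [hL])
  have hL_star (a : A) (x y : J) : star x * L a y = star (L (star a) x) * y :=
    hiso.injective (by simp [hL, mul_assoc, map_star])
  -- `φ (a⋆ a s s⋆) = φ ((a s)⋆ (a s))`
  have hφ_conj (a : A) (s : J) :
      φ (L (star a * a) (s * star s)) = φ (star (L a s) * L a s) := by
    rw [hL_mul_right, hcomm, hL_mul, hL_star, star_star]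
  have hφ_pos (a : A) {e : J} (he : 0 ≤ e) : 0 ≤ φ (L (star a * a) e) := by
    obtain ⟨s, rfl⟩ := CStarAlgebra.nonneg_iff_eq_mul_star_self.mp he
    rw [hφ_conj]
    exact hpos _
  have hl := CStarAlgebra.increasingApproximateUnit J
  have : (CStarAlgebra.approximateUnit J).NeBot := hl.neBot
  let U : Ultrafilter J := Ultrafilter.of (CStarAlgebra.approximateUnit J)
  have hU : (U : Filter J) ≤ CStarAlgebra.approximateUnit J := Ultrafilter.of_le _
  let f : J → WeakDual ℂ A := fun e ↦ StrongDual.toWeakDual (φ ∘L L.flip e)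
  have hf_mem : ∀ᶠ e in (U : Filter J),
      f e ∈ WeakDual.toStrongDual ⁻¹' Metric.closedBall (0 : StrongDual ℂ A) (‖φ‖ * ‖L.flip‖) := by
    filter_upwards [hU hl.eventually_norm] with e he
    simp only [Set.mem_preimage, mem_closedBall_zero_iff]
    calc ‖φ ∘L L.flip e‖ ≤ ‖φ‖ * ‖L.flip e‖ := φ.opNorm_comp_le _
      _ ≤ ‖φ‖ * (‖L.flip‖ * ‖e‖) := by gcongr; exact L.flip.le_opNorm e
      _ ≤ ‖φ‖ * ‖L.flip‖ := by
        gcongr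
        exact mul_le_of_le_one_right (ContinuousLinearMap.opNorm_nonneg _) he
  obtain ⟨τ, -, hτ⟩ := (WeakDual.isCompact_closedBall (0 : StrongDual ℂ A)
    (‖φ‖ * ‖L.flip‖)).ultrafilter_le_nhds (U.map f) (le_principal_iff.mpr hf_mem)
  have hlim (a : A) : Tendsto (fun e ↦ φ (L a e)) U (𝓝 (τ a)) :=
    ((WeakDual.eval_continuous a).tendsto τ).comp hτ
  have hτ_ge (a : A) {e : J} (he : 0 ≤ e) (he1 : ‖e‖ ≤ 1) :
      φ (L (star a * a) e) ≤ τ (star a * a) := by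
    have hr (r : ℝ) (hr : r ∈ Set.Ioo (0 : ℝ) 1) :
        φ (L (star a * a) ((r : ℂ) • e)) ≤ τ (star a * a) := by
      refine ge_of_tendsto (hlim _) ?_
      have hre : 0 ≤ (r : ℂ) • e := by
        rw [Complex.coe_smul]
        exact smul_nonneg hr.1.le he
      have hre1 : ‖(r : ℂ) • e‖ < 1 := by
        rw [norm_smul, Complex.norm_real, Real.norm_of_nonneg hr.1.le]
        nlinarith [hr.1, hr.2, norm_nonneg e]
      have hev := (CStarAlgebra.hasBasis_approximateUnit J).mem_of_mem ⟨hre, hre1⟩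
      filter_upwards [hU hev] with d hd
      have := hφ_pos a (sub_nonneg.mpr hd.1)
      rwa [map_sub, map_sub, sub_nonneg] at this
    have hcont : Continuous fun r : ℝ ↦ φ (L (star a * a) ((r : ℂ) • e)) := by fun_prop
    have ht := (hcont.tendsto 1).mono_left (nhdsWithin_le_nhds (s := Set.Iio 1))
    simp only [Complex.ofReal_one, one_smul] at ht
    exact le_of_tendsto ht <| by
      filter_upwards [Ioo_mem_nhdsLT (zero_lt_one (α := ℝ))] with r hr' using hr r hr'
  have hτ_le (a : A) : τ (star a * a) ≤ τ (a * star a) := by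
    refine le_of_tendsto (hlim _) ?_
    filter_upwards [hU hl.eventually_nonneg, hU hl.eventually_norm] with e he he1
    have ht : Tendsto (fun d ↦ φ (L (star a) (d * L a e))) U (𝓝 (φ (L (star a * a) e))) := by
      rw [hL_mul]
      exact ((φ.continuous.comp (L (star a)).continuous).tendsto _).comp
        ((hl.tendsto_mul_right (L a e)).mono_left hU)
    refine le_of_tendsto ht ?_
    filter_upwards [hU hl.eventually_nonneg, hU hl.eventually_norm] with d hd hd1
    have hd_le := hτ_ge (star a) hd hd1
    obtain ⟨s, rfl⟩ := CStarAlgebra.nonneg_iff_eq_mul_star_self.mp hd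
    rw [hφ_conj, star_star] at hd_le
    set u := L (star a) s
    calc φ (L (star a) (s * star s * L a e))
        = φ (star u * e * u) := by
          rw [mul_assoc, hL_mul_right, hL_star, hcomm]
      _ ≤ φ (star u * u) := by
          rw [← sub_nonneg, ← map_sub]
          apply hφ_nonneg
          rw [sub_nonneg]
          refine (CStarAlgebra.star_left_conjugate_le_norm_smul (IsSelfAdjoint.of_nonneg he)).trans ?_
          exact smul_le_of_le_one_left (star_mul_self_nonneg u) he1
      _ ≤ _ := hd_le
  refine ⟨WeakDual.toStrongDual τ, fun a ↦ ?_, fun a ↦ ?_, fun x ↦ ?_⟩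
  · refine ge_of_tendsto (hlim _) ?_
    filter_upwards [hU hl.eventually_nonneg] with e he using hφ_pos a he
  · exact (hτ_le a).antisymm (by simpa using hτ_le (star a))
  · refine tendsto_nhds_unique (hlim (ι x)) ?_
    simp only [hL_ι]
    exact (φ.continuous.tendsto x).comp ((hl.tendsto_mul_left x).mono_left hU)

/-- A positive bounded trace which is nonzero at `star b * b` can be normalized to a tracial state. -/
lemma exists_isTracialState_of_positive_trace {A : Type*} [CStarAlgebra A] (τ : A →L[ℂ] ℂ)
    (hpos : ∀ a : A, 0 ≤ τ (star a * a)) (htr : ∀ a : A, τ (star a * a) = τ (a * star a))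
    {b : A} (hb : τ (star b * b) ≠ 0) :
    ∃ σ : A →L[ℂ] ℂ, IsTracialState σ ∧ σ (star b * b) ≠ 0 := by
  let _ := CStarAlgebra.spectralOrder A
  have _ := CStarAlgebra.spectralOrderedRing A
  have h1 : 0 ≤ τ 1 := by simpa using hpos 1
  have hne : τ 1 ≠ 0 := by
    intro h0
    apply hb
    refine le_antisymm ?_ (hpos b)
    have hle : star b * b ≤ algebraMap ℝ A ‖star b * b‖ :=
      (IsSelfAdjoint.star_mul_self b).le_algebraMap_norm_self
    obtain ⟨c, hc⟩ := CStarAlgebra.nonneg_iff_eq_star_mul_self.mp (sub_nonneg.mpr hle)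
    have := hpos c
    rw [← hc, map_sub, Algebra.algebraMap_eq_smul_one, ← Complex.coe_smul, map_smul, h0,
      smul_zero, sub_nonneg] at this
    exact this
  refine ⟨(τ 1)⁻¹ • τ, ⟨⟨by simp [hne], fun a ↦ ?_⟩, fun a ↦ ?_⟩, ?_⟩
  · exact mul_nonneg (inv_nonneg.mpr h1) (hpos a)
  · simp [htr a]
  · simp [hne, hb]

/-- Proposition 6.6 (iv).  `A` is a unital C*-algebra, `ι : J → A` realizes the C*-algebra
`J` as a closed two-sided ideal `I` of `A`, and `q : A → Q` realizes `Q` as the quotient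
`A/I` (a surjective `*`-homomorphism with kernel `I`).  If `I` admits a faithful positive
bounded trace and `A/I` admits a faithful tracial state, then `A` admits a separating family
of tracial states: every nonzero positive element of `A` is nonzero under some tracial
state. -/
theorem separating_traces_of_ideal_and_quotient {A J Q : Type*}
    [CStarAlgebra A] [NonUnitalCStarAlgebra J] [CStarAlgebra Q]
    (ι : J →⋆ₙₐ[ℂ] A) (hiso : Isometry ι)
    (hideal : ∀ (a : A) (x : J), (∃ y : J, ι y = a * ι x) ∧ (∃ y : J, ι y = ι x * a))
    (q : A →⋆ₐ[ℂ] Q) (hq : Function.Surjective q)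
    (hker : ∀ a : A, q a = 0 ↔ a ∈ Set.range ι)
    (φ : J →L[ℂ] ℂ)
    (hpos : ∀ x : J, 0 ≤ φ (star x * x))
    (htr : ∀ x : J, φ (star x * x) = φ (x * star x))
    (hfaith : ∀ x : J, φ (star x * x) = 0 → x = 0)
    (τQ : Q →L[ℂ] ℂ) (hτQ : IsTracialState τQ)
    (hτQfaith : ∀ b : Q, b ≠ 0 → (∃ c : Q, b = star c * c) → 0 < τQ b) :
    ∀ a : A, a ≠ 0 → (∃ b : A, a = star b * b) →
      ∃ τ : A →L[ℂ] ℂ, IsTracialState τ ∧ τ a ≠ 0 := by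
  rintro a ha ⟨b, rfl⟩
  by_cases hqb : q b = 0
  · obtain ⟨y, rfl⟩ := (hker b).mp hqb
    obtain ⟨τ, hτpos, hτtr, hτ⟩ := exists_positive_trace_extension ι hiso
      (fun a x ↦ (hideal a x).1) φ hpos htr
    refine exists_isTracialState_of_positive_trace τ hτpos hτtr fun h0 ↦ ha ?_
    rw [← map_star, ← map_mul, hτ] at h0
    simp [hfaith y h0]
  · let qL : A →L[ℂ] Q := LinearMap.mkContinuous (q : A →ₗ[ℂ] Q) 1
      fun x ↦ by simpa using NonUnitalStarAlgHom.norm_apply_le q x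
    have hqL (x : A) : qL x = q x := rfl
    refine ⟨τQ ∘L qL, ⟨⟨?_, fun x ↦ ?_⟩, fun x ↦ ?_⟩, ?_⟩
    · simpa [hqL, map_star] using hτQ.1.1
    · simpa [hqL, map_star] using hτQ.1.2 (q x)
    · simpa [hqL, map_star] using hτQ.2 (q x)
    · have hne : star (q b) * q b ≠ 0 := by simpa using hqb
      simpa [hqL, map_star] using (hτQfaith _ hne ⟨q b, rfl⟩).ne'
end
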